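/- Let f be a completely monotone function and suppose f ∈ WLSC(α−1, c, x₀) ∩ WUSC(β−1, C, x₀) for some c ∈ (0,1], C ≥ 1, x₀ ≥ 0 and 0 < α ≤ β < 1. Then −f' ∈ WLSC(α−2, c', x₀) ∩ WUSC(β−2, C', x₀) for some c' ∈ (0,1] and C' ≥ 1. Consequently, if φ is a Bernstein function with φ(0) = 0 and φ ∈ WLSC(α, c, x₀) ∩ WUSC(β, C, x₀) with 0 < α ≤ β < 1, then −φ'' ∈ WLSC(α−2, c', x₀) ∩ WUSC(β−2, C', x₀) for some c' ∈ (0,1] and C' ≥ 1. -/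

import Mathlib

open Real Set

noncomputable section

/-- Weak lower scaling property at infinity. -/
def WLSC (f : ℝ → ℝ) (θ c x₀ : ℝ) : Prop :=
  ∀ lam : ℝ, 1 ≤ lam → ∀ x : ℝ, x₀ < x → c * lam ^ θ * f x ≤ f (lam * x)

/-- Weak upper scaling property at infinity. -/
def WUSC (f : ℝ → ℝ) (θ C x₀ : ℝ) : Prop :=
  ∀ lam : ℝ, 1 ≤ lam → ∀ x : ℝ, x₀ < x → f (lam * x) ≤ C * lam ^ θ * f x

/-- A function is completely monotone (on `(0,∞)`) if it is smooth there and
`(−1)^n f^{(n)} ≥ 0` for all `n`. -/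
def IsCompletelyMonotone (f : ℝ → ℝ) : Prop :=
  ContDiffOn ℝ (⊤ : ℕ∞) f (Ioi 0) ∧
    ∀ (n : ℕ) (x : ℝ), 0 < x → 0 ≤ (-1 : ℝ) ^ n * iteratedDeriv n f x

/-- A Bernstein function: nonnegative, smooth on `(0,∞)`, with completely
monotone derivative. -/
def IsBernstein (φ : ℝ → ℝ) : Prop :=
  (∀ x : ℝ, 0 < x → 0 ≤ φ x) ∧ ContDiffOn ℝ (⊤ : ℕ∞) φ (Ioi 0) ∧
    IsCompletelyMonotone (deriv φ)

/-!
For a nonnegative convex `f`, the scaling conditions force `f x ≍ -x * f' x` on `(x₀, ∞)`, and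
comparability preserves scaling, so `-f'` scales like `f x / x`.

Both halves of the comparison read off the tangent inequality `f x + f' x * (y - x) ≤ f y`. If
`C * M ^ (β - 1) ≤ 1 / 2`, then `f (M * x) ≤ f x / 2`, and `y = M * x` gives `f x ≲ -x * f' x`.
With `y = x / 2` and the lower scaling at `x / 2`, one gets `-x * f' x ≲ f x`, but only for
`x > 2 * x₀`; on `(x₀, 2 * x₀]` monotonicity of `f` and `f'` gives the bound with a constant that
depends on `f`.

For a nonnegative concave `φ` the reversed tangent inequality gives `φ x ≍ x * φ' x` in the same
way, so `φ'` satisfies the scaling conditions with both exponents lowered by one, and the convex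
case applies to `φ'`.
-/

open Filter Topology Asymptotics

section Scaling

variable {f g : ℝ → ℝ} {θ c C x₀ : ℝ}

lemma isBigO_principal_of_nonneg_of_le {s : Set ℝ} {K : ℝ} (hf : ∀ x ∈ s, 0 ≤ f x)
    (hfg : ∀ x ∈ s, f x ≤ K * g x) : f =O[𝓟 s] g := by
  refine isBigO_principal.2 ⟨|K|, fun x hx ↦ ?_⟩
  calc ‖f x‖ = f x := norm_of_nonneg (hf x hx)
    _ ≤ |K * g x| := (hfg x hx).trans (le_abs_self _)
    _ = |K| * ‖g x‖ := abs_mul K (g x)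

lemma exists_pos_le_mul_of_isBigO_principal {s : Set ℝ} (hg : ∀ x ∈ s, 0 ≤ g x)
    (hfg : f =O[𝓟 s] g) : ∃ K, 0 < K ∧ ∀ x ∈ s, f x ≤ K * g x := by
  obtain ⟨K, hK, hfg⟩ := hfg.exists_pos
  refine ⟨K, hK, fun x hx ↦ ?_⟩
  simpa only [norm_of_nonneg (hg x hx)] using
    (le_abs_self _).trans (isBigOWith_principal.1 hfg x hx)

lemma lt_mul_of_nonneg_of_one_le_of_lt {l x : ℝ} (hx₀ : 0 ≤ x₀) (hl : 1 ≤ l) (hx : x₀ < x) :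
    x₀ < l * x :=
  hx.trans_le (le_mul_of_one_le_left (hx₀.trans hx.le) hl)

lemma WLSC.of_isTheta (hx₀ : 0 ≤ x₀) (hc : 0 < c) (hf : ∀ x ∈ Ioi x₀, 0 ≤ f x)
    (hg : ∀ x ∈ Ioi x₀, 0 ≤ g x) (hfg : f =Θ[𝓟 (Ioi x₀)] g) (h : WLSC f θ c x₀) :
    ∃ c', 0 < c' ∧ c' ≤ 1 ∧ WLSC g θ c' x₀ := by
  obtain ⟨K, hK, hfK⟩ := exists_pos_le_mul_of_isBigO_principal hg hfg.isBigO
  obtain ⟨L, hL, hgL⟩ := exists_pos_le_mul_of_isBigO_principal hf hfg.symm.isBigO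
  refine ⟨min 1 (c / (K * L)), by positivity, min_le_left _ _, fun l hl x hx ↦ ?_⟩
  have hgx : 0 ≤ g x := hg x hx
  calc min 1 (c / (K * L)) * l ^ θ * g x
      ≤ c / (K * L) * l ^ θ * (L * f x) := by
        gcongr
        · exact min_le_right _ _
        · exact hgL x hx
    _ = c * l ^ θ * f x / K := by field_simp
    _ ≤ g (l * x) := by
        rw [div_le_iff₀' hK]
        exact (h l hl x hx).trans (hfK _ (lt_mul_of_nonneg_of_one_le_of_lt hx₀ hl hx))

lemma WUSC.of_isTheta (hx₀ : 0 ≤ x₀) (hf : ∀ x ∈ Ioi x₀, 0 ≤ f x)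
    (hg : ∀ x ∈ Ioi x₀, 0 ≤ g x) (hfg : f =Θ[𝓟 (Ioi x₀)] g) (h : WUSC f θ C x₀) :
    ∃ C', 1 ≤ C' ∧ WUSC g θ C' x₀ := by
  obtain ⟨K, -, hfK⟩ := exists_pos_le_mul_of_isBigO_principal hg hfg.isBigO
  obtain ⟨L, hL, hgL⟩ := exists_pos_le_mul_of_isBigO_principal hf hfg.symm.isBigO
  refine ⟨max 1 (L * |C| * K), le_max_left _ _, fun l hl x hx ↦ ?_⟩
  have hfx : 0 ≤ f x := hf x hx
  have hgx : 0 ≤ g x := hg x hx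
  calc g (l * x) ≤ L * f (l * x) := hgL _ (lt_mul_of_nonneg_of_one_le_of_lt hx₀ hl hx)
    _ ≤ L * (C * l ^ θ * f x) := by gcongr; exact h l hl x hx
    _ ≤ L * (|C| * l ^ θ * (K * g x)) := by
        gcongr
        · exact le_abs_self C
        · exact hfK x hx
    _ = L * |C| * K * l ^ θ * g x := by ring
    _ ≤ max 1 (L * |C| * K) * l ^ θ * g x := by gcongr; exact le_max_right _ _

lemma WLSC.of_mul_left (hx₀ : 0 ≤ x₀) (h : WLSC (fun x ↦ x * g x) θ c x₀) :
    WLSC g (θ - 1) c x₀ := by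
  intro l hl x hx
  have hl0 : 0 < l := one_pos.trans_le hl
  have hx0 : 0 < x := hx₀.trans_lt hx
  refine le_of_mul_le_mul_left ?_ (mul_pos hl0 hx0)
  calc l * x * (c * l ^ (θ - 1) * g x) = c * l ^ θ * (x * g x) := by
        rw [rpow_sub_one hl0.ne']; field_simp
    _ ≤ l * x * g (l * x) := h l hl x hx

lemma WUSC.of_mul_left (hx₀ : 0 ≤ x₀) (h : WUSC (fun x ↦ x * g x) θ C x₀) :
    WUSC g (θ - 1) C x₀ := by
  intro l hl x hx
  have hl0 : 0 < l := one_pos.trans_le hl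
  have hx0 : 0 < x := hx₀.trans_lt hx
  refine le_of_mul_le_mul_left ?_ (mul_pos hl0 hx0)
  calc l * x * g (l * x) ≤ C * l ^ θ * (x * g x) := h l hl x hx
    _ = l * x * (C * l ^ (θ - 1) * g x) := by
        rw [rpow_sub_one hl0.ne']; field_simp

lemma exists_scaling_of_isTheta_mul {η : ℝ} (hx₀ : 0 ≤ x₀) (hc : 0 < c)
    (hf : ∀ x ∈ Ioi x₀, 0 ≤ f x) (hg : ∀ x ∈ Ioi x₀, 0 ≤ g x)
    (hfg : f =Θ[𝓟 (Ioi x₀)] fun x ↦ x * g x) (hL : WLSC f θ c x₀) (hU : WUSC f η C x₀) :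
    ∃ c' C' : ℝ, 0 < c' ∧ c' ≤ 1 ∧ 1 ≤ C' ∧ WLSC g (θ - 1) c' x₀ ∧ WUSC g (η - 1) C' x₀ := by
  have hxg : ∀ x ∈ Ioi x₀, 0 ≤ x * g x := fun x hx ↦ mul_nonneg (hx₀.trans hx.le) (hg x hx)
  obtain ⟨c', hc', hc'1, hL'⟩ := hL.of_isTheta hx₀ hc hf hxg hfg
  obtain ⟨C', hC', hU'⟩ := hU.of_isTheta hx₀ hf hxg hfg
  exact ⟨c', C', hc', hc'1, hC', hL'.of_mul_left hx₀, hU'.of_mul_left hx₀⟩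

end Scaling

lemma add_deriv_mul_sub_le_of_convexOn {s : Set ℝ} {f : ℝ → ℝ} {x y : ℝ} (hf : ConvexOn ℝ s f)
    (hx : x ∈ s) (hy : y ∈ s) (hd : DifferentiableAt ℝ f x) :
    f x + deriv f x * (y - x) ≤ f y := by
  rcases lt_trichotomy x y with hxy | rfl | hyx
  · have hslope := hf.deriv_le_slope hx hy hxy hd
    rw [slope_def_field, le_div_iff₀ (sub_pos.2 hxy)] at hslope
    linarith
  · simp
  · have hslope := hf.slope_le_deriv hy hx hyx hd
    rw [slope_def_field, div_le_iff₀ (sub_pos.2 hyx)] at hslope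
    linarith

lemma le_add_deriv_mul_sub_of_concaveOn {s : Set ℝ} {f : ℝ → ℝ} {x y : ℝ} (hf : ConcaveOn ℝ s f)
    (hx : x ∈ s) (hy : y ∈ s) (hd : DifferentiableAt ℝ f x) :
    f y ≤ f x + deriv f x * (y - x) := by
  have h := add_deriv_mul_sub_le_of_convexOn hf.neg hx hy hd.neg
  simp only [Pi.neg_apply, deriv.neg] at h
  linarith

section Convex

variable {f : ℝ → ℝ} {θ η c C x₀ : ℝ}

lemma WLSC.deriv_eq_zero_of_le_of_eq_zero (hx₀ : 0 ≤ x₀) (hf0 : ∀ x ∈ Ioi 0, 0 ≤ f x) (hc : 0 < c)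
    (hL : WLSC f θ c x₀) {x y : ℝ} (hx : x₀ < x) (hxy : x ≤ y) (hy : f y = 0) :
    deriv f x = 0 := by
  have hx0 : 0 < x := hx₀.trans_lt hx
  have hfx : f x = 0 := by
    have hscale := hL (y / x) ((one_le_div hx0).2 hxy) x hx
    rw [div_mul_cancel₀ _ hx0.ne', hy] at hscale
    have hyx : 0 < y / x := div_pos (hx0.trans_le hxy) hx0
    exact le_antisymm (nonpos_of_mul_nonpos_right hscale (by positivity)) (hf0 x hx0)
  have hmin : IsLocalMin f x := by
    filter_upwards [Ioi_mem_nhds hx0] with z hz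
    exact hfx.trans_le (hf0 z hz)
  exact hmin.deriv_eq_zero

lemma WUSC.exists_le_mul_neg_deriv_of_convexOn (hf0 : ∀ x ∈ Ioi 0, 0 ≤ f x)
    (hd : DifferentiableOn ℝ f (Ioi 0)) (hf : ConvexOn ℝ (Ioi 0) f) (hx₀ : 0 ≤ x₀)
    (hη : η < 0) (hU : WUSC f η C x₀) :
    ∃ K, 0 < K ∧ ∀ x ∈ Ioi x₀, f x ≤ K * (x * -deriv f x) := by
  have hdecay : Tendsto (fun M : ℝ ↦ C * M ^ η) atTop (𝓝 0) := by
    simpa using (tendsto_rpow_neg_atTop (neg_pos.2 hη)).const_mul C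
  obtain ⟨M, hMC, hM⟩ : ∃ M : ℝ, C * M ^ η ≤ 1 / 2 ∧ 1 < M :=
    ((hdecay.eventually_le_const (by norm_num)).and (eventually_gt_atTop 1)).exists
  refine ⟨2 * (M - 1), by linarith, fun x hx ↦ ?_⟩
  have hx0 : x ∈ Ioi 0 := hx₀.trans_lt hx
  have hMx : M * x ∈ Ioi 0 := mul_pos (one_pos.trans hM) hx0
  have hhalf : f (M * x) ≤ 1 / 2 * f x :=
    (hU M hM.le x hx).trans (mul_le_mul_of_nonneg_right hMC (hf0 x hx0))
  have htangent := add_deriv_mul_sub_le_of_convexOn hf hx0 hMx (hd.differentiableAt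
    (Ioi_mem_nhds hx0))
  linarith

lemma WUSC.deriv_nonpos_of_convexOn (hf0 : ∀ x ∈ Ioi 0, 0 ≤ f x)
    (hd : DifferentiableOn ℝ f (Ioi 0)) (hf : ConvexOn ℝ (Ioi 0) f) (hx₀ : 0 ≤ x₀)
    (hη : η < 0) (hU : WUSC f η C x₀) : ∀ x ∈ Ioi 0, deriv f x ≤ 0 := by
  intro x hx
  obtain ⟨K, hK, hfK⟩ := hU.exists_le_mul_neg_deriv_of_convexOn hf0 hd hf hx₀ hη
  obtain ⟨y, hxy, hy⟩ : ∃ y, x ≤ y ∧ x₀ < y :=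
    ⟨max x (x₀ + 1), le_max_left _ _, lt_max_of_lt_right (lt_add_one x₀)⟩
  have hy0 : 0 < y := hx₀.trans_lt hy
  have hprod : 0 ≤ K * (y * -deriv f y) := (hf0 y hy0).trans (hfK y hy)
  have hderiv_y : 0 ≤ -deriv f y :=
    nonneg_of_mul_nonneg_right (nonneg_of_mul_nonneg_right hprod hK) hy0
  have hmono := hf.monotoneOn_deriv fun z hz ↦ hd.differentiableAt (Ioi_mem_nhds hz)
  exact (hmono hx hy0 hxy).trans (neg_nonneg.1 hderiv_y)

lemma WLSC.isBigO_mul_neg_deriv_Ioi_of_convexOn (hf0 : ∀ x ∈ Ioi 0, 0 ≤ f x)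
    (hd : DifferentiableOn ℝ f (Ioi 0)) (hf : ConvexOn ℝ (Ioi 0) f) (hx₀ : 0 ≤ x₀)
    (hderiv : ∀ x ∈ Ioi 0, deriv f x ≤ 0) (hc : 0 < c) (hL : WLSC f θ c x₀) :
    (fun x ↦ x * -deriv f x) =O[𝓟 (Ioi (2 * x₀))] f := by
  have hpos : ∀ x ∈ Ioi (2 * x₀), 0 < x := fun x hx ↦ (by positivity : 0 ≤ 2 * x₀).trans_lt hx
  have hc2 : 0 < c * 2 ^ θ := by positivity
  refine isBigO_principal_of_nonneg_of_le (K := 2 / (c * 2 ^ θ))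
    (fun x hx ↦ mul_nonneg (hpos x hx).le (neg_nonneg.2 (hderiv x (hpos x hx)))) fun x hx ↦ ?_
  have hx0 := hpos x hx
  have htangent := add_deriv_mul_sub_le_of_convexOn hf hx0 (half_pos hx0)
    (hd.differentiableAt (Ioi_mem_nhds hx0))
  have hscale : c * 2 ^ θ * f (x / 2) ≤ f x := by
    simpa [mul_div_cancel₀] using
      hL 2 one_le_two (x / 2) ((lt_div_iff₀' two_pos).2 hx)
  calc x * -deriv f x ≤ 2 * f (x / 2) := by linarith [hf0 x hx0]
    _ ≤ 2 * (f x / (c * 2 ^ θ)) := by gcongr; rwa [le_div_iff₀' hc2]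
    _ = 2 / (c * 2 ^ θ) * f x := by ring

lemma WLSC.isBigO_mul_neg_deriv_Ioc_of_convexOn (hf0 : ∀ x ∈ Ioi 0, 0 ≤ f x)
    (hd : DifferentiableOn ℝ f (Ioi 0)) (hf : ConvexOn ℝ (Ioi 0) f) (hx₀ : 0 ≤ x₀)
    (hderiv : ∀ x ∈ Ioi 0, deriv f x ≤ 0) (hc : 0 < c) (hL : WLSC f θ c x₀) :
    (fun x ↦ x * -deriv f x) =O[𝓟 (Ioc x₀ (2 * x₀))] f := by
  rcases hx₀.eq_or_lt with rfl | hx₀pos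
  · simp
  have h2x₀ : 2 * x₀ ∈ Ioi 0 := mul_pos two_pos hx₀pos
  have hdiff : ∀ x ∈ Ioi 0, DifferentiableAt ℝ f x := fun x hx ↦
    hd.differentiableAt (Ioi_mem_nhds hx)
  -- If `f (2 * x₀) = 0`, the monotonicity bound is void, but `f` vanishes on `(x₀, 2 * x₀]`.
  rcases (hf0 _ h2x₀).eq_or_lt with hzero | hpos
  · refine isBigO_principal.2 ⟨0, fun x hx ↦ ?_⟩
    simp [hL.deriv_eq_zero_of_le_of_eq_zero hx₀ hf0 hc hx.1 hx.2 hzero.symm]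
  set K := 2 * x₀ * -deriv f x₀ / f (2 * x₀) with hK
  have hderiv₀ : 0 ≤ -deriv f x₀ := neg_nonneg.2 (hderiv x₀ hx₀pos)
  have hK0 : 0 ≤ K := by positivity
  refine isBigO_principal_of_nonneg_of_le (K := K)
    (fun x hx ↦ mul_nonneg (hx₀.trans hx.1.le) (neg_nonneg.2 (hderiv x (hx₀pos.trans hx.1))))
    fun x hx ↦ ?_
  have hx0 : x ∈ Ioi 0 := hx₀pos.trans hx.1
  have hf_le : f (2 * x₀) ≤ f x := by
    have htangent := add_deriv_mul_sub_le_of_convexOn hf h2x₀ hx0 (hdiff _ h2x₀)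
    have := mul_nonneg_of_nonpos_of_nonpos (hderiv _ h2x₀) (sub_nonpos.2 hx.2)
    linarith
  calc x * -deriv f x ≤ 2 * x₀ * -deriv f x₀ := by
        gcongr
        · exact neg_nonneg.2 (hderiv x hx0)
        · exact hx.2
        · exact hf.monotoneOn_deriv hdiff hx₀pos hx0 hx.1.le
    _ = K * f (2 * x₀) := by rw [hK, div_mul_cancel₀ _ hpos.ne']
    _ ≤ K * f x := mul_le_mul_of_nonneg_left hf_le hK0

lemma isTheta_mul_neg_deriv_of_convexOn (hf0 : ∀ x ∈ Ioi 0, 0 ≤ f x)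
    (hd : DifferentiableOn ℝ f (Ioi 0)) (hf : ConvexOn ℝ (Ioi 0) f) (hx₀ : 0 ≤ x₀)
    (hc : 0 < c) (hη : η < 0) (hL : WLSC f θ c x₀) (hU : WUSC f η C x₀) :
    f =Θ[𝓟 (Ioi x₀)] fun x ↦ x * -deriv f x := by
  have hderiv := hU.deriv_nonpos_of_convexOn hf0 hd hf hx₀ hη
  obtain ⟨K, -, hfK⟩ := hU.exists_le_mul_neg_deriv_of_convexOn hf0 hd hf hx₀ hη
  refine ⟨isBigO_principal_of_nonneg_of_le (fun x hx ↦ hf0 x (hx₀.trans_lt hx)) hfK, ?_⟩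
  have hsplit : Ioi x₀ = Ioc x₀ (2 * x₀) ∪ Ioi (2 * x₀) :=
    (Ioc_union_Ioi_eq_Ioi (by linarith)).symm
  rw [hsplit, ← sup_principal]
  exact (hL.isBigO_mul_neg_deriv_Ioc_of_convexOn hf0 hd hf hx₀ hderiv hc).sup
    (hL.isBigO_mul_neg_deriv_Ioi_of_convexOn hf0 hd hf hx₀ hderiv hc)

theorem exists_scaling_neg_deriv_of_convexOn (hf0 : ∀ x ∈ Ioi 0, 0 ≤ f x)
    (hd : DifferentiableOn ℝ f (Ioi 0)) (hf : ConvexOn ℝ (Ioi 0) f) (hx₀ : 0 ≤ x₀)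
    (hc : 0 < c) (hη : η < 0) (hL : WLSC f θ c x₀) (hU : WUSC f η C x₀) :
    ∃ c' C' : ℝ, 0 < c' ∧ c' ≤ 1 ∧ 1 ≤ C' ∧
      WLSC (fun x ↦ -deriv f x) (θ - 1) c' x₀ ∧ WUSC (fun x ↦ -deriv f x) (η - 1) C' x₀ :=
  exists_scaling_of_isTheta_mul hx₀ hc (fun x hx ↦ hf0 x (hx₀.trans_lt hx))
    (fun x hx ↦ neg_nonneg.2 (hU.deriv_nonpos_of_convexOn hf0 hd hf hx₀ hη x (hx₀.trans_lt hx)))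
    (isTheta_mul_neg_deriv_of_convexOn hf0 hd hf hx₀ hc hη hL hU) hL hU

end Convex

section Concave

variable {φ : ℝ → ℝ} {θ η c C x₀ : ℝ}

lemma deriv_nonneg_of_concaveOn_Ioi (hφ0 : ∀ x ∈ Ioi 0, 0 ≤ φ x)
    (hd : DifferentiableOn ℝ φ (Ioi 0)) (hφ : ConcaveOn ℝ (Ioi 0) φ) :
    ∀ x ∈ Ioi 0, 0 ≤ deriv φ x := by
  intro x hx
  by_contra! hneg
  set y := x + (φ x + 1) / -deriv φ x with hy
  have hstep : 0 ≤ (φ x + 1) / -deriv φ x :=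
    div_nonneg (add_nonneg (hφ0 x hx) zero_le_one) (neg_nonneg.2 hneg.le)
  have hy0 : y ∈ Ioi 0 := add_pos_of_pos_of_nonneg hx hstep
  have htangent := le_add_deriv_mul_sub_of_concaveOn hφ hx hy0
    (hd.differentiableAt (Ioi_mem_nhds hx))
  have hvalue : deriv φ x * (y - x) = -(φ x + 1) := by
    rw [hy]; field_simp [hneg.ne]; ring
  linarith [hφ0 y hy0]

lemma mul_deriv_le_two_mul_of_concaveOn_Ioi (hφ0 : ∀ x ∈ Ioi 0, 0 ≤ φ x)
    (hd : DifferentiableOn ℝ φ (Ioi 0)) (hφ : ConcaveOn ℝ (Ioi 0) φ)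
    {x : ℝ} (hx : 0 < x) : x * deriv φ x ≤ 2 * φ x := by
  have htangent := le_add_deriv_mul_sub_of_concaveOn hφ hx (half_pos hx)
    (hd.differentiableAt (Ioi_mem_nhds hx))
  linarith [hφ0 (x / 2) (half_pos hx)]

lemma WLSC.exists_le_mul_deriv_of_concaveOn (hφ0 : ∀ x ∈ Ioi 0, 0 ≤ φ x)
    (hd : DifferentiableOn ℝ φ (Ioi 0)) (hφ : ConcaveOn ℝ (Ioi 0) φ) (hx₀ : 0 ≤ x₀)
    (hc : 0 < c) (hθ : 0 < θ) (hL : WLSC φ θ c x₀) :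
    ∃ K, ∀ x ∈ Ioi x₀, φ x ≤ K * (x * deriv φ x) := by
  have hgrowth : Tendsto (fun M : ℝ ↦ c * M ^ θ) atTop atTop :=
    (tendsto_rpow_atTop hθ).const_mul_atTop hc
  obtain ⟨M, hMc, hM⟩ : ∃ M : ℝ, 2 ≤ c * M ^ θ ∧ 1 ≤ M :=
    ((hgrowth.eventually_ge_atTop 2).and (eventually_ge_atTop 1)).exists
  refine ⟨M - 1, fun x hx ↦ ?_⟩
  have hx0 : x ∈ Ioi 0 := hx₀.trans_lt hx
  have hMx : M * x ∈ Ioi 0 := mul_pos (one_pos.trans_le hM) hx0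
  have hdouble : 2 * φ x ≤ φ (M * x) :=
    (mul_le_mul_of_nonneg_right hMc (hφ0 x hx0)).trans (hL M hM x hx)
  have htangent := le_add_deriv_mul_sub_of_concaveOn hφ hx0 hMx
    (hd.differentiableAt (Ioi_mem_nhds hx0))
  linarith

lemma isTheta_mul_deriv_of_concaveOn (hφ0 : ∀ x ∈ Ioi 0, 0 ≤ φ x)
    (hd : DifferentiableOn ℝ φ (Ioi 0)) (hφ : ConcaveOn ℝ (Ioi 0) φ) (hx₀ : 0 ≤ x₀)
    (hc : 0 < c) (hθ : 0 < θ) (hL : WLSC φ θ c x₀) : φ =Θ[𝓟 (Ioi x₀)] fun x ↦ x * deriv φ x := by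
  have hpos : ∀ x ∈ Ioi x₀, 0 < x := fun x hx ↦ hx₀.trans_lt hx
  have hderiv := deriv_nonneg_of_concaveOn_Ioi hφ0 hd hφ
  obtain ⟨K, hK⟩ := hL.exists_le_mul_deriv_of_concaveOn hφ0 hd hφ hx₀ hc hθ
  exact ⟨isBigO_principal_of_nonneg_of_le (fun x hx ↦ hφ0 x (hpos x hx)) hK,
    isBigO_principal_of_nonneg_of_le
      (fun x hx ↦ mul_nonneg (hpos x hx).le (hderiv x (hpos x hx)))
      fun x hx ↦ mul_deriv_le_two_mul_of_concaveOn_Ioi hφ0 hd hφ (hpos x hx)⟩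

theorem exists_scaling_deriv_of_concaveOn (hφ0 : ∀ x ∈ Ioi 0, 0 ≤ φ x)
    (hd : DifferentiableOn ℝ φ (Ioi 0)) (hφ : ConcaveOn ℝ (Ioi 0) φ) (hx₀ : 0 ≤ x₀)
    (hc : 0 < c) (hθ : 0 < θ) (hL : WLSC φ θ c x₀) (hU : WUSC φ η C x₀) :
    ∃ c' C' : ℝ, 0 < c' ∧ c' ≤ 1 ∧ 1 ≤ C' ∧
      WLSC (deriv φ) (θ - 1) c' x₀ ∧ WUSC (deriv φ) (η - 1) C' x₀ :=
  exists_scaling_of_isTheta_mul hx₀ hc (fun x hx ↦ hφ0 x (hx₀.trans_lt hx))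
    (fun x hx ↦ deriv_nonneg_of_concaveOn_Ioi hφ0 hd hφ x (hx₀.trans_lt hx))
    (isTheta_mul_deriv_of_concaveOn hφ0 hd hφ hx₀ hc hθ hL) hL hU

end Concave

section CompletelyMonotone

variable {f φ : ℝ → ℝ}

lemma IsCompletelyMonotone.nonneg (hf : IsCompletelyMonotone f) : ∀ x ∈ Ioi 0, 0 ≤ f x :=
  fun x hx ↦ by simpa using hf.2 0 x hx

lemma IsCompletelyMonotone.differentiableOn (hf : IsCompletelyMonotone f) :
    DifferentiableOn ℝ f (Ioi 0) :=
  hf.1.differentiableOn (by simp)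

lemma IsCompletelyMonotone.antitoneOn (hf : IsCompletelyMonotone f) : AntitoneOn f (Ioi 0) := by
  refine antitoneOn_of_deriv_nonpos (convex_Ioi 0) hf.differentiableOn.continuousOn
    (hf.differentiableOn.mono interior_subset) fun x hx ↦ ?_
  simpa using hf.2 1 x (interior_subset hx)

lemma IsCompletelyMonotone.convexOn (hf : IsCompletelyMonotone f) : ConvexOn ℝ (Ioi 0) f := by
  have hderiv : ContDiffOn ℝ (⊤ : ℕ∞) (deriv f) (Ioi 0) :=
    ((contDiffOn_infty_iff_deriv_of_isOpen isOpen_Ioi).1 hf.1).2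
  refine convexOn_of_deriv2_nonneg' (convex_Ioi 0) hf.differentiableOn
    (hderiv.differentiableOn (by simp)) fun x hx ↦ ?_
  simpa [iteratedDeriv_eq_iterate] using hf.2 2 x hx

lemma IsBernstein.differentiableOn (hφ : IsBernstein φ) : DifferentiableOn ℝ φ (Ioi 0) :=
  hφ.2.1.differentiableOn (by simp)

lemma IsBernstein.concaveOn (hφ : IsBernstein φ) : ConcaveOn ℝ (Ioi 0) φ :=
  (hφ.2.2.antitoneOn.mono interior_subset).concaveOn_of_deriv (convex_Ioi 0)
    hφ.differentiableOn.continuousOn (hφ.differentiableOn.mono interior_subset)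

end CompletelyMonotone

theorem scaling_of_neg_deriv_and_second_deriv_general
    (α β c C x₀ : ℝ) (hβ : β < 1) (hc : 0 < c) (hx₀ : 0 ≤ x₀) :
    (∀ f : ℝ → ℝ, (∀ x ∈ Ioi 0, 0 ≤ f x) → DifferentiableOn ℝ f (Ioi 0) →
      ConvexOn ℝ (Ioi 0) f → WLSC f (α - 1) c x₀ → WUSC f (β - 1) C x₀ →
      ∃ c' C' : ℝ, 0 < c' ∧ c' ≤ 1 ∧ 1 ≤ C' ∧
        WLSC (fun x => -(deriv f x)) (α - 2) c' x₀ ∧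
        WUSC (fun x => -(deriv f x)) (β - 2) C' x₀) ∧
    (0 < α → ∀ φ : ℝ → ℝ, (∀ x ∈ Ioi 0, 0 ≤ φ x) → DifferentiableOn ℝ φ (Ioi 0) →
      ConcaveOn ℝ (Ioi 0) φ → DifferentiableOn ℝ (deriv φ) (Ioi 0) →
      ConvexOn ℝ (Ioi 0) (deriv φ) → WLSC φ α c x₀ → WUSC φ β C x₀ →
      ∃ c' C' : ℝ, 0 < c' ∧ c' ≤ 1 ∧ 1 ≤ C' ∧
        WLSC (fun x => -(deriv (deriv φ) x)) (α - 2) c' x₀ ∧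
        WUSC (fun x => -(deriv (deriv φ) x)) (β - 2) C' x₀) := by
  have hexp (θ : ℝ) : θ - 2 = θ - 1 - 1 := by ring
  simp only [hexp]
  refine ⟨fun f hf0 hd hf hL hU ↦
    exists_scaling_neg_deriv_of_convexOn hf0 hd hf hx₀ hc (sub_neg.2 hβ) hL hU,
    fun hα φ hφ0 hd hφ hd' hφ' hL hU ↦ ?_⟩
  obtain ⟨c₁, C₁, hc₁, -, -, hL₁, hU₁⟩ :=
    exists_scaling_deriv_of_concaveOn hφ0 hd hφ hx₀ hc hα hL hU
  exact exists_scaling_neg_deriv_of_convexOn (deriv_nonneg_of_concaveOn_Ioi hφ0 hd hφ) hd' hφ' hx₀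
    hc₁ (sub_neg.2 hβ) hL₁ hU₁

/-- If a completely monotone `f` satisfies
`f ∈ WLSC(α−1,c,x₀) ∩ WUSC(β−1,C,x₀)` with `0 < α ≤ β < 1`, then
`−f' ∈ WLSC(α−2,c',x₀) ∩ WUSC(β−2,C',x₀)`; consequently, for a Bernstein function
`φ` with `φ(0) = 0` and `φ ∈ WLSC(α,c,x₀) ∩ WUSC(β,C,x₀)`, one has
`−φ'' ∈ WLSC(α−2,c',x₀) ∩ WUSC(β−2,C',x₀)`. -/
theorem scaling_of_neg_deriv_and_second_deriv
    (α β c C x₀ : ℝ)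
    (hα : 0 < α) (hαβ : α ≤ β) (hβ : β < 1)
    (hc : 0 < c) (hc1 : c ≤ 1) (hC : 1 ≤ C) (hx₀ : 0 ≤ x₀) :
    (∀ f : ℝ → ℝ, IsCompletelyMonotone f →
      WLSC f (α - 1) c x₀ → WUSC f (β - 1) C x₀ →
      ∃ c' C' : ℝ, 0 < c' ∧ c' ≤ 1 ∧ 1 ≤ C' ∧
        WLSC (fun x => -(deriv f x)) (α - 2) c' x₀ ∧
        WUSC (fun x => -(deriv f x)) (β - 2) C' x₀) ∧
    (∀ φ : ℝ → ℝ, IsBernstein φ → φ 0 = 0 →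
      WLSC φ α c x₀ → WUSC φ β C x₀ →
      ∃ c' C' : ℝ, 0 < c' ∧ c' ≤ 1 ∧ 1 ≤ C' ∧
        WLSC (fun x => -(deriv (deriv φ) x)) (α - 2) c' x₀ ∧
        WUSC (fun x => -(deriv (deriv φ) x)) (β - 2) C' x₀) := by
  have h := scaling_of_neg_deriv_and_second_deriv_general α β c C x₀ hβ hc hx₀
  exact ⟨fun f hf ↦ h.1 f hf.nonneg hf.differentiableOn hf.convexOn,
    fun φ hφ _ ↦ h.2 hα φ hφ.1 hφ.differentiableOn hφ.concaveOn
      hφ.2.2.differentiableOn hφ.2.2.convexOn⟩
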